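/- arXiv:2102.00135 — 3 statements merged into one kernel-verified Lean document; each statement's English description precedes it below -/
import Mathlib

section
/- (Linear convergence of APMD with halving perturbation.) Let l = ⌈log_γ(1/4)⌉ and let (π_k) be APMD iterates with π_0 the uniform policy, τ_k = 2^{−(⌊k/l⌋+1)}, and stepsizes η_k with 1 + η_k τ_k = 1/γ, where π_{k+1}(·|s) = argmin_{p∈Δ_A}{ η_k[⟨Q_{τ_k}^{π_k}(s,·), p⟩ + h^p(s) + τ_k D_{π_0}^p(s)] + D_{π_k}^p(s) } for each s. Then for every k ≥ 0: f(π_k) − f(π*) ≤ 2^{−⌊k/l⌋} [ f(π_0) − f(π*) + 2 log|A| / (1−γ) ]. -/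
open Finset

noncomputable section

namespace RL

/-- The probability simplex on a finite set `A`. -/
def simplex (A : Type*) [Fintype A] : Set (A → ℝ) :=
  {p | (∀ a, 0 ≤ p a) ∧ ∑ a, p a = 1}

/-- A policy assigns to each state a distribution over actions. -/
def IsPolicy {S A : Type*} [Fintype A] (π : S → A → ℝ) : Prop :=
  ∀ s, π s ∈ simplex A

/-- `KL q p` is the Bregman (KL) divergence `D_q^p = ∑_a p a * log (p a / q a)`. -/
def KL {A : Type*} [Fintype A] (q p : A → ℝ) : ℝ :=
  ∑ a, p a * Real.log (p a / q a)

/-- The state transition matrix `P^π` induced by policy `π`. -/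
def Pmat {S A : Type*} [Fintype A] (P : S → A → S → ℝ) (π : S → A → ℝ) :
    Matrix S S ℝ :=
  Matrix.of fun s s' => ∑ a, π s a * P s a s'

/-- `V` satisfies the Bellman equation for policy `π`, cost `c`, regularizer `h`,
and discount factor `γ`. -/
def IsValue {S A : Type*} [Fintype S] [Fintype A] (P : S → A → S → ℝ)
    (c : S → A → ℝ) (h : S → (A → ℝ) → ℝ) (γ : ℝ) (π : S → A → ℝ)
    (V : S → ℝ) : Prop :=
  ∀ s, V s = (∑ a, π s a * c s a) + h s (π s)
    + γ * ∑ s', (∑ a, π s a * P s a s') * V s'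

/-- The action-value function `Q^π` determined by a state-value function `V`. -/
def Qfun {S A : Type*} [Fintype S] (P : S → A → S → ℝ) (c : S → A → ℝ)
    (h : S → (A → ℝ) → ℝ) (γ : ℝ) (π : S → A → ℝ) (V : S → ℝ) :
    S → A → ℝ :=
  fun s a => c s a + h s (π s) + γ * ∑ s', P s a s' * V s'

/-- The discounted state-visitation distribution `d_s^π(s')`. -/
def dvisit {S A : Type*} [Fintype S] [Fintype A] [DecidableEq S]
    (P : S → A → S → ℝ) (γ : ℝ) (π : S → A → ℝ) (s s' : S) : ℝ :=
  (1 - γ) * ∑' t : ℕ, γ ^ t * ((Pmat P π) ^ t) s s'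

/-- `next` minimizes `p ↦ η * (⟨G, p⟩ + hreg p) + KL base p` over the simplex. -/
def IsProxStep {A : Type*} [Fintype A] (G : A → ℝ) (hreg : (A → ℝ) → ℝ)
    (η : ℝ) (base next : A → ℝ) : Prop :=
  next ∈ simplex A ∧ ∀ p ∈ simplex A,
    η * ((∑ a, G a * next a) + hreg next) + KL base next ≤
      η * ((∑ a, G a * p a) + hreg p) + KL base p

/-- `h` is convex with modulus `μ` relative to KL, with subgradients `h'`. -/
def ConvexReg {S A : Type*} [Fintype A] (h : S → (A → ℝ) → ℝ)
    (h' : S → (A → ℝ) → A → ℝ) (μ : ℝ) : Prop :=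
  ∀ s : S, ∀ p ∈ simplex A, ∀ q ∈ simplex A,
    μ * KL q p ≤ h s p - (h s q + ∑ a, h' s q a * (p a - q a))

/-!
Rebasing the divergences at the minimizer turns a mirror-descent step into a three-point inequality.
Compared with the current policy, it shows that the perturbed value decreases; compared with `π*`
and averaged over its stationary distribution, it shows that the gap plus `τ / (1 - γ)` times the
averaged divergence from the iterate to `π*` contracts by `γ`, provided `1 + η τ = 1 / γ`.
Lowering `τ` to `τ'` raises this Lyapunov function by at most `(τ - τ') / (1 - γ)` times the
divergence from `π₀` to `π*`. During an epoch of `l` steps the contraction gives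
`γ ^ l ≤ 1/4`, so a total factor `1/2` per epoch survives this increment.
-/

open InformationTheory Matrix

section Divergence

variable {A : Type*} [Fintype A] {p q u : A → ℝ}

lemma KL_eq_sum_klFun (hq : ∀ a, 0 < q a) (hqs : q ∈ simplex A) (hps : p ∈ simplex A) :
    KL q p = ∑ a, q a * klFun (p a / q a) := by
  have hterm (a : A) : q a * klFun (p a / q a) = p a * Real.log (p a / q a) + (q a - p a) := by
    have := (hq a).ne'
    rw [klFun_apply]
    field_simp
    ring
  simp only [hterm, sum_add_distrib, sum_sub_distrib, hqs.2, hps.2, sub_self, add_zero, KL]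

lemma KL_nonneg (hq : ∀ a, 0 < q a) (hqs : q ∈ simplex A) (hps : p ∈ simplex A) :
    0 ≤ KL q p := by
  rw [KL_eq_sum_klFun hq hqs hps]
  exact sum_nonneg fun a _ =>
    mul_nonneg (hq a).le (klFun_nonneg (div_nonneg (hps.1 a) (hq a).le))

lemma KL_self (hq : ∀ a, 0 < q a) : KL q q = 0 :=
  sum_eq_zero fun a _ => by simp [div_self (hq a).ne']

lemma klFun_le_sq {x : ℝ} (hx : 0 ≤ x) : klFun x ≤ (x - 1) ^ 2 := by
  have hlog : x * Real.log x ≤ x * (x - 1) := by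
    rcases hx.eq_or_lt with rfl | hpos
    · simp
    · exact mul_le_mul_of_nonneg_left (Real.log_le_sub_one_of_pos hpos) hx
  rw [klFun_apply]
  linarith

lemma KL_le_chiSq (hq : ∀ a, 0 < q a) (hqs : q ∈ simplex A) (hps : p ∈ simplex A) :
    KL q p ≤ ∑ a, (p a - q a) ^ 2 / q a := by
  rw [KL_eq_sum_klFun hq hqs hps]
  refine sum_le_sum fun a _ => ?_
  have hqa := hq a
  calc q a * klFun (p a / q a) ≤ q a * (p a / q a - 1) ^ 2 :=
        mul_le_mul_of_nonneg_left (klFun_le_sq (div_nonneg (hps.1 a) hqa.le)) hqa.le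
    _ = (p a - q a) ^ 2 / q a := by field_simp

lemma KL_eq_KL_add_sum_log (hu : ∀ a, 0 < u a) (hq : ∀ a, 0 < q a) (x : A → ℝ) :
    KL u x = KL q x + ∑ a, x a * Real.log (q a / u a) := by
  rw [KL, KL, ← sum_add_distrib]
  refine sum_congr rfl fun a _ => ?_
  rcases eq_or_ne (x a) 0 with hx | hx
  · simp [hx]
  · rw [Real.log_div hx (hu a).ne', Real.log_div hx (hq a).ne',
      Real.log_div (hq a).ne' (hu a).ne']
    ring

lemma KL_le_neg_log {m : ℝ} (hm : 0 < m) (hmq : ∀ a, m ≤ q a) (hps : p ∈ simplex A) :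
    KL q p ≤ -Real.log m := by
  calc KL q p ≤ ∑ a, p a * -Real.log m := by
        refine sum_le_sum fun a _ => ?_
        rcases (hps.1 a).eq_or_lt with hpa | hpa
        · simp [← hpa]
        · have hp1 : p a ≤ 1 := hps.2 ▸ single_le_sum (fun b _ => hps.1 b) (mem_univ a)
          have hlogp : Real.log (p a) ≤ 0 := Real.log_nonpos hpa.le hp1
          have hlogq : Real.log m ≤ Real.log (q a) := Real.log_le_log hm (hmq a)
          rw [Real.log_div hpa.ne' (hm.trans_le (hmq a)).ne']
          exact mul_le_mul_of_nonneg_left (by linarith) hpa.le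
    _ = -Real.log m := by rw [← sum_mul, hps.2, one_mul]

lemma KL_uniform_le [Nonempty A] (hq : ∀ a, q a = 1 / (Fintype.card A : ℝ))
    (hps : p ∈ simplex A) : KL q p ≤ Real.log (Fintype.card A) := by
  have hcard : (0 : ℝ) < 1 / Fintype.card A := by simp [Fintype.card_pos]
  simpa using KL_le_neg_log hcard (fun a => (hq a).ge) hps

end Divergence

section ProximalStep

variable {A : Type*} [Fintype A]

lemma convex_simplex : Convex ℝ (simplex A) :=
  convex_stdSimplex ℝ A

lemma ConvexReg.convexOn {S : Type*} {h : S → (A → ℝ) → ℝ} {h' : S → (A → ℝ) → A → ℝ}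
    (hconv : ConvexReg h h' 0) (s : S) : ConvexOn ℝ (simplex A) (h s) := by
  refine ⟨convex_simplex, fun x hx y hy a b ha hb hab => ?_⟩
  set z := a • x + b • y with hz
  have hzs : z ∈ simplex A := convex_simplex hx hy ha hb hab
  have hbalance : a * ∑ i, h' s z i * (x i - z i) + b * ∑ i, h' s z i * (y i - z i) = 0 := by
    rw [mul_sum, mul_sum, ← sum_add_distrib]
    refine sum_eq_zero fun i _ => ?_
    simp only [hz, Pi.add_apply, Pi.smul_apply, smul_eq_mul]
    linear_combination (-(h' s z i * (a * x i + b * y i))) * hab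
  have hsubx := mul_le_mul_of_nonneg_left (hconv s x hx z hzs) ha
  have hsuby := mul_le_mul_of_nonneg_left (hconv s y hy z hzs) hb
  have hsplit : h s z = a * h s z + b * h s z := by rw [← add_mul, hab, one_mul]
  simp only [smul_eq_mul]
  linarith

lemma nonneg_of_forall_add_mul_nonneg {b d : ℝ} (hbd : ∀ t ∈ Set.Ioc (0 : ℝ) 1, 0 ≤ b + t * d) :
    0 ≤ b := by
  have hlim : Filter.Tendsto (fun t => b + t * d) (nhdsWithin 0 (Set.Ioi 0)) (nhds b) := by
    have hcont : Continuous fun t : ℝ => b + t * d := by fun_prop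
    simpa using (hcont.tendsto 0).mono_left nhdsWithin_le_nhds
  refine ge_of_tendsto hlim ?_
  filter_upwards [Ioc_mem_nhdsGT one_pos] with t ht using hbd t ht

-- On the segment from `q` the divergence is `O(t²)`, so it does not affect first-order optimality.
lemma isMinOn_of_isMinOn_add_KL {φ : (A → ℝ) → ℝ} {M : ℝ} {q : A → ℝ}
    (hφ : ConvexOn ℝ (simplex A) φ) (hM : 0 ≤ M) (hq : ∀ a, 0 < q a) (hqs : q ∈ simplex A)
    (hmin : IsMinOn (fun x => φ x + M * KL q x) (simplex A) q) : IsMinOn φ (simplex A) q := by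
  intro p hp
  set C := ∑ a, (p a - q a) ^ 2 / q a
  suffices hfirst : ∀ t ∈ Set.Ioc (0 : ℝ) 1, 0 ≤ (φ p - φ q) + t * (M * C) from
    sub_nonneg.1 (nonneg_of_forall_add_mul_nonneg hfirst)
  rintro t ⟨ht0, ht1⟩
  set x := (1 - t) • q + t • p with hx
  have hxs : x ∈ simplex A :=
    convex_simplex hqs hp (sub_nonneg.2 ht1) ht0.le (sub_add_cancel 1 t)
  have hφx : φ x ≤ (1 - t) * φ q + t * φ p :=
    hφ.2 hqs hp (sub_nonneg.2 ht1) ht0.le (sub_add_cancel 1 t)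
  have hKLx : KL q x ≤ t ^ 2 * C := by
    refine (KL_le_chiSq hq hqs hxs).trans_eq ?_
    rw [mul_sum]
    refine sum_congr rfl fun a _ => ?_
    simp only [hx, Pi.add_apply, Pi.smul_apply, smul_eq_mul]
    ring
  have hqx : φ q ≤ φ x + M * KL q x := by simpa [KL_self hq] using hmin hxs
  have hscaled : 0 ≤ t * ((φ p - φ q) + t * (M * C)) := by
    linarith [mul_le_mul_of_nonneg_left hKLx hM]
  exact nonneg_of_mul_nonneg_right hscaled ht0

lemma IsProxStep.three_point {G u base next p : A → ℝ} {g : (A → ℝ) → ℝ} {η τ : ℝ}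
    (hstep : IsProxStep G (fun x => g x + τ * KL u x) η base next)
    (hg : ConvexOn ℝ (simplex A) g) (hη : 0 ≤ η) (hτ : 0 ≤ τ)
    (hu : ∀ a, 0 < u a) (hbase : ∀ a, 0 < base a) (hnext : ∀ a, 0 < next a)
    (hp : p ∈ simplex A) :
    η * ((∑ a, G a * next a) + (g next + τ * KL u next)) + KL base next
        + (1 + η * τ) * KL next p ≤
      η * ((∑ a, G a * p a) + (g p + τ * KL u p)) + KL base p := by
  -- Rebasing every divergence at `next` only costs a linear term.
  set w : A → ℝ := fun a =>
    η * G a + η * τ * Real.log (next a / u a) + Real.log (next a / base a) with hw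
  set φ : (A → ℝ) → ℝ := fun x => η * g x + w ⬝ᵥ x with hφ
  have hobjective (x : A → ℝ) :
      η * ((∑ a, G a * x a) + (g x + τ * KL u x)) + KL base x
        = φ x + (1 + η * τ) * KL next x := by
    have hlinear : w ⬝ᵥ x = η * (∑ a, G a * x a)
        + η * τ * (∑ a, x a * Real.log (next a / u a))
        + ∑ a, x a * Real.log (next a / base a) := by
      simp only [dotProduct, hw, mul_sum, ← sum_add_distrib]
      exact sum_congr rfl fun a _ => by ring
    rw [KL_eq_KL_add_sum_log hu hnext, KL_eq_KL_add_sum_log hbase hnext, hφ]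
    linear_combination -hlinear
  have hφconv : ConvexOn ℝ (simplex A) φ :=
    (hg.smul hη).add ((dotProductBilin ℝ ℝ w).convexOn convex_simplex)
  have hmin : IsMinOn (fun x => φ x + (1 + η * τ) * KL next x) (simplex A) next := by
    refine isMinOn_iff.2 fun x hx => ?_
    simpa only [hobjective] using hstep.2 x hx
  have hφle : φ next ≤ φ p :=
    isMinOn_of_isMinOn_add_KL hφconv (by positivity) hnext hstep.1 hmin hp
  rw [hobjective, hobjective, KL_self hnext]
  linarith

end ProximalStep

section Bellman

variable {S A : Type*} [Fintype S] [Fintype A]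

/-- The Bellman operator of the policy `w` with regularizer `h`; its fixed points are the value
functions of `w` in the sense of `IsValue`. -/
def bellman (P : S → A → S → ℝ) (c : S → A → ℝ) (h : S → (A → ℝ) → ℝ) (γ : ℝ)
    (w : S → A → ℝ) (v : S → ℝ) : S → ℝ :=
  fun s => (∑ a, w s a * c s a) + h s (w s) + γ * (Pmat P w *ᵥ v) s

variable {P : S → A → S → ℝ} {c : S → A → ℝ} {h h₁ h₂ : S → (A → ℝ) → ℝ} {γ : ℝ}
  {w π : S → A → ℝ} {V V₁ V₂ v v₁ v₂ ν : S → ℝ}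

lemma IsValue.bellman_eq (hV : IsValue P c h γ w V) : bellman P c h γ w V = V :=
  funext fun s => (hV s).symm

lemma bellman_sub_bellman (v₁ v₂ : S → ℝ) :
    bellman P c h γ w v₁ - bellman P c h γ w v₂ = γ • (Pmat P w *ᵥ (v₁ - v₂)) := by
  ext s
  simp only [bellman, mulVec_sub, Pi.sub_apply, Pi.smul_apply, smul_eq_mul]
  ring

lemma Pmat_mem_simplex (hP : ∀ s a, P s a ∈ simplex S) (hw : IsPolicy w) (s : S) :
    Pmat P w s ∈ simplex S := by
  refine ⟨fun s' => sum_nonneg fun a _ => mul_nonneg ((hw s).1 a) ((hP s a).1 s'), ?_⟩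
  simp only [Pmat, of_apply]
  rw [sum_comm]
  simp only [← mul_sum, (hP s _).2, mul_one, (hw s).2]

lemma nonpos_of_le_smul_mulVec {R : Matrix S S ℝ} (hγ0 : 0 ≤ γ) (hγ1 : γ < 1)
    (hR : ∀ s, R s ∈ simplex S) (hv : v ≤ γ • (R *ᵥ v)) : v ≤ 0 := by
  intro s
  have : Nonempty S := ⟨s⟩
  obtain ⟨m, hm⟩ := Finite.exists_max v
  have havg : (R *ᵥ v) m ≤ v m :=
    calc (R *ᵥ v) m ≤ ∑ s', R m s' * v m :=
          sum_le_sum fun s' _ => mul_le_mul_of_nonneg_left (hm s') ((hR m).1 s')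
      _ = v m := by rw [← sum_mul, (hR m).2, one_mul]
  have hvm : v m ≤ γ * v m := (hv m).trans (mul_le_mul_of_nonneg_left havg hγ0)
  have hmax : v m ≤ 0 := by nlinarith
  exact (hm s).trans hmax

lemma IsValue.le_of_bellman_le (hP : ∀ s a, P s a ∈ simplex S) (hγ0 : 0 ≤ γ) (hγ1 : γ < 1)
    (hw : IsPolicy w) (hV : IsValue P c h γ w V) (hv : bellman P c h γ w v ≤ v) : V ≤ v := by
  rw [← sub_nonpos]
  refine nonpos_of_le_smul_mulVec hγ0 hγ1 (Pmat_mem_simplex hP hw) ?_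
  calc V - v ≤ V - bellman P c h γ w v := sub_le_sub_left hv V
    _ = γ • (Pmat P w *ᵥ (V - v)) := by
      rw [← bellman_sub_bellman (c := c) (h := h), hV.bellman_eq]

lemma bellman_mono (hP : ∀ s a, P s a ∈ simplex S) (hγ0 : 0 ≤ γ) (hw : IsPolicy w)
    (hv : v₁ ≤ v₂) : bellman P c h γ w v₁ ≤ bellman P c h γ w v₂ := fun s => by
  have hmul : (Pmat P w *ᵥ v₁) s ≤ (Pmat P w *ᵥ v₂) s :=
    dotProduct_le_dotProduct_of_nonneg_left hv (Pmat_mem_simplex hP hw s).1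
  exact add_le_add_right (mul_le_mul_of_nonneg_left hmul hγ0) _

lemma IsValue.le_bellman_of_bellman_le (hP : ∀ s a, P s a ∈ simplex S) (hγ0 : 0 ≤ γ)
    (hγ1 : γ < 1) (hw : IsPolicy w) (hV : IsValue P c h γ w V)
    (hv : bellman P c h γ w v ≤ v) : V ≤ bellman P c h γ w v :=
  hV.bellman_eq.symm.trans_le (bellman_mono hP hγ0 hw (hV.le_of_bellman_le hP hγ0 hγ1 hw hv))

lemma IsValue.mono_regularizer (hP : ∀ s a, P s a ∈ simplex S) (hγ0 : 0 ≤ γ) (hγ1 : γ < 1)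
    (hw : IsPolicy w) (hV₁ : IsValue P c h₁ γ w V₁) (hV₂ : IsValue P c h₂ γ w V₂)
    (hle : ∀ s, h₁ s (w s) ≤ h₂ s (w s)) : V₁ ≤ V₂ := by
  refine hV₁.le_of_bellman_le hP hγ0 hγ1 hw ?_
  calc bellman P c h₁ γ w V₂ ≤ bellman P c h₂ γ w V₂ := fun s => by
        simp only [bellman]
        linarith [hle s]
    _ = V₂ := hV₂.bellman_eq

lemma sum_Qfun_mul_add (hw : IsPolicy w) (s : S) :
    (∑ a, Qfun P c h γ π V s a * w s a) + h s (w s)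
      = bellman P c h γ w V s + h s (π s) := by
  have hcost : ∑ a, c s a * w s a = ∑ a, w s a * c s a := sum_congr rfl fun a _ => mul_comm _ _
  have hreg : ∑ a, h s (π s) * w s a = h s (π s) := by rw [← mul_sum, (hw s).2, mul_one]
  have hnext : ∑ a, γ * (∑ s', P s a s' * V s') * w s a = γ * (Pmat P w *ᵥ V) s := by
    simp only [mulVec, dotProduct, Pmat, of_apply, sum_mul, mul_sum]
    rw [sum_comm]
    exact sum_congr rfl fun s' _ => sum_congr rfl fun a _ => by ring
  simp only [Qfun, add_mul, sum_add_distrib, hcost, hreg, hnext, bellman]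
  ring

lemma dotProduct_bellman_sub_value (hν : ν ᵥ* Pmat P w = ν) (hV : IsValue P c h γ w V)
    (v : S → ℝ) : ν ⬝ᵥ bellman P c h γ w v - ν ⬝ᵥ V = γ * (ν ⬝ᵥ v - ν ⬝ᵥ V) :=
  calc ν ⬝ᵥ bellman P c h γ w v - ν ⬝ᵥ V
      = ν ⬝ᵥ (bellman P c h γ w v - bellman P c h γ w V) := by
        rw [hV.bellman_eq, dotProduct_sub]
    _ = γ * (ν ⬝ᵥ v - ν ⬝ᵥ V) := by
        rw [bellman_sub_bellman, dotProduct_smul, dotProduct_mulVec, hν, dotProduct_sub,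
          smul_eq_mul]

lemma dotProduct_value_sub_value (hν : ν ᵥ* Pmat P w = ν) (hV₁ : IsValue P c h₁ γ w V₁)
    (hV₂ : IsValue P c h₂ γ w V₂) :
    (1 - γ) * (ν ⬝ᵥ V₁ - ν ⬝ᵥ V₂) = ∑ s, ν s * (h₁ s (w s) - h₂ s (w s)) := by
  have hreg : bellman P c h₁ γ w V₂ - bellman P c h₂ γ w V₂
      = fun s => h₁ s (w s) - h₂ s (w s) := by
    ext s
    simp only [bellman, Pi.sub_apply]
    ring
  have hchange : ν ⬝ᵥ bellman P c h₁ γ w V₂ - ν ⬝ᵥ V₂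
      = ∑ s, ν s * (h₁ s (w s) - h₂ s (w s)) := by
    rw [hV₂.bellman_eq] at hreg
    rw [← dotProduct_sub, hreg, dotProduct]
  linear_combination hchange - dotProduct_bellman_sub_value hν hV₁ V₂

end Bellman

section APMDStep

/-- The regularizer `h` perturbed by `τ` times the divergence from the reference policy `π₀`. -/
def perturb {S A : Type*} [Fintype A] (h : S → (A → ℝ) → ℝ) (π₀ : S → A → ℝ)
    (τ : ℝ) : S → (A → ℝ) → ℝ :=
  fun s p => h s p + τ * KL (π₀ s) p

variable {S A : Type*} [Fintype S] [Fintype A]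

/-- One step `π ↦ π'` of approximate policy mirror descent with stepsize `η` and perturbation
`τ`, where `V` stands for the perturbed value function of `π`. -/
def IsAPMDStep (P : S → A → S → ℝ) (c : S → A → ℝ) (h : S → (A → ℝ) → ℝ) (γ : ℝ)
    (π₀ : S → A → ℝ) (τ η : ℝ) (π : S → A → ℝ) (V : S → ℝ) (π' : S → A → ℝ) : Prop :=
  ∀ s, IsProxStep (Qfun P c (perturb h π₀ τ) γ π V s) (perturb h π₀ τ s) η (π s) (π' s)

/-- The divergence of the policy `w` from the policy `π`, averaged over the state
distribution `ν`. -/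
def avgKL (ν : S → ℝ) (π w : S → A → ℝ) : ℝ :=
  ∑ s, ν s * KL (π s) (w s)

variable {P : S → A → S → ℝ} {c : S → A → ℝ} {h : S → (A → ℝ) → ℝ} {γ τ η : ℝ}
  {π₀ π π' w : S → A → ℝ} {V V' Vw ν : S → ℝ}

lemma avgKL_nonneg (hν : ∀ s, 0 ≤ ν s) (hπ : IsPolicy π) (hπpos : ∀ s a, 0 < π s a)
    (hw : IsPolicy w) : 0 ≤ avgKL ν π w :=
  sum_nonneg fun s _ => mul_nonneg (hν s) (KL_nonneg (hπpos s) (hπ s) (hw s))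

lemma avgKL_le_of_forall_le {L : ℝ} (hν : ν ∈ simplex S) (hL : ∀ s, KL (π s) (w s) ≤ L) :
    avgKL ν π w ≤ L :=
  calc avgKL ν π w ≤ ∑ s, ν s * L :=
        sum_le_sum fun s _ => mul_le_mul_of_nonneg_left (hL s) (hν.1 s)
    _ = L := by rw [← sum_mul, hν.2, one_mul]

lemma IsAPMDStep.three_point (hstep : IsAPMDStep P c h γ π₀ τ η π V π')
    (hconv : ∀ s, ConvexOn ℝ (simplex A) (h s)) (hη : 0 ≤ η) (hτ : 0 ≤ τ)
    (hπ₀pos : ∀ s a, 0 < π₀ s a) (hπpos : ∀ s a, 0 < π s a) (hπ'pos : ∀ s a, 0 < π' s a)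
    (hw : IsPolicy w) (s : S) :
    η * bellman P c (perturb h π₀ τ) γ π' V s + KL (π s) (π' s)
        + (1 + η * τ) * KL (π' s) (w s) ≤
      η * bellman P c (perturb h π₀ τ) γ w V s + KL (π s) (w s) := by
  have hprox := (hstep s).three_point (hconv s) hη hτ (hπ₀pos s) (hπpos s) (hπ'pos s) (hw s)
  have hπ' : IsPolicy π' := fun s => (hstep s).1
  have hQ (v : S → A → ℝ) (hv : IsPolicy v) :
      (∑ a, Qfun P c (perturb h π₀ τ) γ π V s a * v s a) + (h s (v s) + τ * KL (π₀ s) (v s))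
        = bellman P c (perturb h π₀ τ) γ v V s + perturb h π₀ τ s (π s) :=
    sum_Qfun_mul_add hv s
  rw [hQ π' hπ', hQ w hw] at hprox
  linarith

lemma IsAPMDStep.bellman_le (hstep : IsAPMDStep P c h γ π₀ τ η π V π')
    (hconv : ∀ s, ConvexOn ℝ (simplex A) (h s)) (hη : 0 < η) (hτ : 0 ≤ τ)
    (hπ₀pos : ∀ s a, 0 < π₀ s a) (hπpos : ∀ s a, 0 < π s a) (hπ'pos : ∀ s a, 0 < π' s a)
    (hπ : IsPolicy π) (hV : IsValue P c (perturb h π₀ τ) γ π V) :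
    bellman P c (perturb h π₀ τ) γ π' V ≤ V := by
  intro s
  have hthree := hstep.three_point hconv hη.le hτ hπ₀pos hπpos hπ'pos hπ s
  rw [hV.bellman_eq, KL_self (hπpos s)] at hthree
  have hforward : 0 ≤ KL (π s) (π' s) := KL_nonneg (hπpos s) (hπ s) (hstep s).1
  have hbackward : 0 ≤ (1 + η * τ) * KL (π' s) (π s) :=
    mul_nonneg (by positivity) (KL_nonneg (hπ'pos s) (hstep s).1 (hπ s))
  exact le_of_mul_le_mul_left (by linarith) hη

lemma IsAPMDStep.avg_value_le (hstep : IsAPMDStep P c h γ π₀ τ η π V π')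
    (hP : ∀ s a, P s a ∈ simplex S) (hγ0 : 0 ≤ γ) (hγ1 : γ < 1)
    (hconv : ∀ s, ConvexOn ℝ (simplex A) (h s)) (hη : 0 < η) (hτ : 0 ≤ τ)
    (hπ₀pos : ∀ s a, 0 < π₀ s a) (hπpos : ∀ s a, 0 < π s a) (hπ'pos : ∀ s a, 0 < π' s a)
    (hπ : IsPolicy π) (hV : IsValue P c (perturb h π₀ τ) γ π V)
    (hV' : IsValue P c (perturb h π₀ τ) γ π' V') (hw : IsPolicy w) (hν : ∀ s, 0 ≤ ν s) :
    η * (ν ⬝ᵥ V') + (1 + η * τ) * avgKL ν π' w ≤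
      η * (ν ⬝ᵥ bellman P c (perturb h π₀ τ) γ w V) + avgKL ν π w := by
  have hπ' : IsPolicy π' := fun s => (hstep s).1
  have hV'le : V' ≤ bellman P c (perturb h π₀ τ) γ π' V :=
    hV'.le_bellman_of_bellman_le hP hγ0 hγ1 hπ'
      (hstep.bellman_le hconv hη hτ hπ₀pos hπpos hπ'pos hπ hV)
  simp only [dotProduct, avgKL, mul_sum, ← sum_add_distrib]
  refine sum_le_sum fun s _ => ?_
  have hthree := hstep.three_point hconv hη.le hτ hπ₀pos hπpos hπ'pos hw s
  have hKL : 0 ≤ KL (π s) (π' s) := KL_nonneg (hπpos s) (hπ s) (hπ' s)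
  have hstate : η * V' s + (1 + η * τ) * KL (π' s) (w s)
      ≤ η * bellman P c (perturb h π₀ τ) γ w V s + KL (π s) (w s) := by
    linarith [mul_le_mul_of_nonneg_left (hV'le s) hη.le]
  linarith [mul_le_mul_of_nonneg_left hstate (hν s)]

/-- The Lyapunov function of the step analysis: the optimality gap of `π` against the comparator
`w`, plus the averaged divergence between them. The weight `τ / (1 - γ)` is the one for which both
terms contract at the same rate `γ`. Here `V` and `Vw` stand for the values of `π` and `w`. -/
def lyapunov (γ τ : ℝ) (ν V Vw : S → ℝ) (π w : S → A → ℝ) : ℝ :=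
  ν ⬝ᵥ V - ν ⬝ᵥ Vw + τ / (1 - γ) * avgKL ν π w

lemma IsAPMDStep.lyapunov_le (hstep : IsAPMDStep P c h γ π₀ τ η π V π')
    (hP : ∀ s a, P s a ∈ simplex S) (hγ0 : 0 < γ) (hγ1 : γ < 1)
    (hconv : ∀ s, ConvexOn ℝ (simplex A) (h s)) (hτ : 0 < τ) (hητ : 1 + η * τ = 1 / γ)
    (hπ₀pos : ∀ s a, 0 < π₀ s a) (hπpos : ∀ s a, 0 < π s a) (hπ'pos : ∀ s a, 0 < π' s a)
    (hπ : IsPolicy π) (hV : IsValue P c (perturb h π₀ τ) γ π V)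
    (hV' : IsValue P c (perturb h π₀ τ) γ π' V') (hw : IsPolicy w)
    (hVw : IsValue P c (perturb h π₀ τ) γ w Vw) (hν : ∀ s, 0 ≤ ν s)
    (hνw : ν ᵥ* Pmat P w = ν) :
    lyapunov γ τ ν V' Vw π' w ≤ γ * lyapunov γ τ ν V Vw π w := by
  have hγ' : 0 < 1 - γ := sub_pos.2 hγ1
  have hη : 0 < η := by
    have h1γ : 1 < 1 / γ := one_lt_one_div hγ0 hγ1
    exact pos_of_mul_pos_left (by linarith) hτ.le
  have havg := hstep.avg_value_le hP hγ0.le hγ1 hconv hη hτ.le hπ₀pos hπpos hπ'pos hπ hV hV' hw hν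
  have hbellman := dotProduct_bellman_sub_value hνw hVw V
  have hgap : η * (ν ⬝ᵥ V' - ν ⬝ᵥ Vw) + 1 / γ * avgKL ν π' w
      ≤ η * (γ * (ν ⬝ᵥ V - ν ⬝ᵥ Vw)) + avgKL ν π w := by
    rw [← hbellman, ← hητ]
    linarith
  have hweight : γ * (τ / (1 - γ)) * η = 1 := by
    field_simp at hητ ⊢
    linarith
  have hscaled := mul_le_mul_of_nonneg_left hgap (a := γ * (τ / (1 - γ))) (by positivity)
  have hcancel : γ * (1 / γ) = 1 := mul_one_div_cancel hγ0.ne'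
  unfold lyapunov
  linear_combination hscaled - (ν ⬝ᵥ V' - ν ⬝ᵥ Vw - γ * (ν ⬝ᵥ V - ν ⬝ᵥ Vw)) * hweight
    - τ / (1 - γ) * avgKL ν π' w * hcancel

end APMDStep

section Perturbation

variable {S A : Type*} [Fintype S] [Fintype A] {P : S → A → S → ℝ} {c : S → A → ℝ}
  {h : S → (A → ℝ) → ℝ} {γ τ τ' : ℝ} {π₀ π w : S → A → ℝ} {V V' Vw Vw' ν : S → ℝ}

lemma dotProduct_value_perturb_sub (hγ1 : γ < 1) (hν : ν ᵥ* Pmat P w = ν)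
    (hV : IsValue P c (perturb h π₀ τ) γ w V) (hV' : IsValue P c (perturb h π₀ τ') γ w V') :
    ν ⬝ᵥ V - ν ⬝ᵥ V' = (τ - τ') * (avgKL ν π₀ w / (1 - γ)) := by
  have hγ' : 1 - γ ≠ 0 := (sub_pos.2 hγ1).ne'
  have hdiff : ∑ s, ν s * (perturb h π₀ τ s (w s) - perturb h π₀ τ' s (w s))
      = (τ - τ') * avgKL ν π₀ w := by
    rw [avgKL, mul_sum]
    exact sum_congr rfl fun s _ => by simp only [perturb]; ring
  rw [mul_div_assoc', eq_div_iff hγ', ← hdiff, ← dotProduct_value_sub_value hν hV hV', mul_comm]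

lemma value_perturb_mono (hP : ∀ s a, P s a ∈ simplex S) (hγ0 : 0 ≤ γ) (hγ1 : γ < 1)
    (hπ₀ : IsPolicy π₀) (hπ₀pos : ∀ s a, 0 < π₀ s a) (hπ : IsPolicy π) (hτ : τ' ≤ τ)
    (hV : IsValue P c (perturb h π₀ τ) γ π V) (hV' : IsValue P c (perturb h π₀ τ') γ π V') :
    V' ≤ V :=
  hV'.mono_regularizer hP hγ0 hγ1 hπ hV fun s => by
    have hKL := KL_nonneg (hπ₀pos s) (hπ₀ s) (hπ s)
    exact add_le_add_right (mul_le_mul_of_nonneg_right hτ hKL) _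

lemma lyapunov_le_add_of_le (hP : ∀ s a, P s a ∈ simplex S) (hγ0 : 0 ≤ γ) (hγ1 : γ < 1)
    (hπ₀ : IsPolicy π₀) (hπ₀pos : ∀ s a, 0 < π₀ s a)
    (hπ : IsPolicy π) (hπpos : ∀ s a, 0 < π s a) (hw : IsPolicy w) (hτ : τ' ≤ τ)
    (hV : IsValue P c (perturb h π₀ τ) γ π V) (hV' : IsValue P c (perturb h π₀ τ') γ π V')
    (hVw : IsValue P c (perturb h π₀ τ) γ w Vw) (hVw' : IsValue P c (perturb h π₀ τ') γ w Vw')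
    (hν : ∀ s, 0 ≤ ν s) (hνw : ν ᵥ* Pmat P w = ν) :
    lyapunov γ τ' ν V' Vw' π w
      ≤ lyapunov γ τ ν V Vw π w + (τ - τ') * (avgKL ν π₀ w / (1 - γ)) := by
  have hγ' : 0 < 1 - γ := sub_pos.2 hγ1
  have hvalue : ν ⬝ᵥ V' ≤ ν ⬝ᵥ V :=
    dotProduct_le_dotProduct_of_nonneg_left
      (value_perturb_mono hP hγ0 hγ1 hπ₀ hπ₀pos hπ hτ hV hV') hν
  have hcomparator := dotProduct_value_perturb_sub hγ1 hνw hVw hVw'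
  have hdivergence : τ' / (1 - γ) * avgKL ν π w ≤ τ / (1 - γ) * avgKL ν π w :=
    mul_le_mul_of_nonneg_right (div_le_div_of_nonneg_right hτ hγ'.le)
      (avgKL_nonneg hν hπ hπpos hw)
  unfold lyapunov
  linarith

-- The perturbation vanishes at its own reference policy.
lemma lyapunov_reference_le (hP : ∀ s a, P s a ∈ simplex S) (hγ0 : 0 ≤ γ) (hγ1 : γ < 1)
    (hπ₀ : IsPolicy π₀) (hπ₀pos : ∀ s a, 0 < π₀ s a)
    (hV : IsValue P c (perturb h π₀ τ) γ π₀ V) (hV' : IsValue P c (perturb h π₀ τ') γ π₀ V')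
    (hVw : IsValue P c (perturb h π₀ τ) γ w Vw) (hVw' : IsValue P c (perturb h π₀ τ') γ w Vw')
    (hν : ∀ s, 0 ≤ ν s) (hνw : ν ᵥ* Pmat P w = ν) :
    lyapunov γ τ ν V Vw π₀ w ≤ lyapunov γ τ' ν V' Vw' π₀ w := by
  have hvalue : ν ⬝ᵥ V ≤ ν ⬝ᵥ V' :=
    dotProduct_le_dotProduct_of_nonneg_left
      (hV.mono_regularizer hP hγ0 hγ1 hπ₀ hV' fun s => by
        simp only [perturb, KL_self (hπ₀pos s), mul_zero, le_refl]) hν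
  have hcomparator := dotProduct_value_perturb_sub hγ1 hνw hVw hVw'
  unfold lyapunov
  linear_combination hvalue - hcomparator

end Perturbation

section HalvingSchedule

lemma pow_le_of_eq_ceil_logb {γ x : ℝ} {l : ℕ} (hγ0 : 0 < γ) (hγ1 : γ < 1) (hx : 0 < x)
    (hl : (l : ℤ) = ⌈Real.logb γ x⌉) : γ ^ l ≤ x := by
  have hlogb : Real.logb γ x ≤ l := by exact_mod_cast hl ▸ Int.le_ceil (Real.logb γ x)
  rwa [Real.logb_le_iff_le_rpow_of_base_lt_one hγ0 hγ1 hx, Real.rpow_natCast] at hlogb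

-- Over an epoch of `l` steps the factor `γ ^ l ≤ 1/4` leaves room for the increment `B / 4`
-- (in units of the current scale) caused by halving the perturbation.
lemma le_pow_mod_mul_of_halving_recurrence {γ δ B : ℝ} {l : ℕ} {x : ℕ → ℝ} (hγ : 0 ≤ γ)
    (hγl : γ ^ l ≤ 1 / 4) (hδ : 0 ≤ δ) (hB : 0 ≤ B) (hx0 : x 0 ≤ δ)
    (hx : ∀ k, x (k + 1) ≤
      γ * x k + ((1 / 2) ^ (k / l + 1) - (1 / 2) ^ ((k + 1) / l + 1)) * B) (k : ℕ) :
    x k ≤ γ ^ (k % l) * ((1 / 2) ^ (k / l) * (δ + B)) := by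
  induction k with
  | zero => simpa using hx0.trans (le_add_of_nonneg_right hB)
  | succ k ih =>
    have hstep := (hx k).trans (add_le_add_left (mul_le_mul_of_nonneg_left ih hγ) _)
    have hdivmod := Nat.div_add_mod k l
    have hdivmod' := Nat.div_add_mod (k + 1) l
    by_cases hdvd : l ∣ k + 1
    · have hdiv : (k + 1) / l = k / l + 1 := Nat.succ_div_of_dvd hdvd
      have hmod' : (k + 1) % l = 0 := Nat.mod_eq_zero_of_dvd hdvd
      have hmod : k % l + 1 = l := by
        rw [hdiv, hmod', mul_add] at hdivmod'
        omega
      have hscale : (0 : ℝ) ≤ (1 / 2) ^ (k / l) := by positivity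
      have hcontract : γ * γ ^ (k % l) ≤ 1 / 4 := by rwa [← pow_succ', hmod]
      have hquarter := mul_le_mul_of_nonneg_right hcontract
        (mul_nonneg hscale (add_nonneg hδ hB))
      rw [hdiv, pow_succ _ (k / l + 1), pow_succ] at hstep
      rw [hdiv, hmod', pow_zero, one_mul, pow_succ]
      linarith [mul_nonneg hscale hδ]
    · have hdiv : (k + 1) / l = k / l := Nat.succ_div_of_not_dvd hdvd
      have hmod : (k + 1) % l = k % l + 1 := by
        rw [hdiv] at hdivmod'
        omega
      rw [hdiv, sub_self, zero_mul, add_zero] at hstep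
      rwa [hdiv, hmod, pow_succ', mul_assoc]

lemma le_of_halving_recurrence {γ δ B : ℝ} {l : ℕ} {x : ℕ → ℝ} (hγ0 : 0 ≤ γ) (hγ1 : γ ≤ 1)
    (hγl : γ ^ l ≤ 1 / 4) (hδ : 0 ≤ δ) (hB : 0 ≤ B) (hx0 : x 0 ≤ δ)
    (hx : ∀ k, x (k + 1) ≤
      γ * x k + ((1 / 2) ^ (k / l + 1) - (1 / 2) ^ ((k + 1) / l + 1)) * B) (k : ℕ) :
    x k ≤ (1 / 2) ^ (k / l) * (δ + B) :=
  (le_pow_mod_mul_of_halving_recurrence hγ0 hγl hδ hB hx0 hx k).trans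
    (mul_le_of_le_one_left (by positivity) (pow_le_one₀ hγ0 hγ1))

lemma antitone_half_pow_div (l : ℕ) : Antitone fun k : ℕ => (1 / 2 : ℝ) ^ (k / l + 1) :=
  fun _ _ hmn => pow_le_pow_of_le_one (by norm_num) (by norm_num)
    (Nat.succ_le_succ (Nat.div_le_div_right hmn))

end HalvingSchedule

theorem apmd_linear_convergence_halving_general {S A : Type*} [Fintype S] [Fintype A]
    {P : S → A → S → ℝ} (hP : ∀ s a, P s a ∈ simplex S) {c : S → A → ℝ} {γ : ℝ}
    (hγ0 : 0 < γ) (hγ1 : γ < 1) {h : S → (A → ℝ) → ℝ}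
    (hconv : ∀ s, ConvexOn ℝ (simplex A) (h s)) {l : ℕ} (hl : γ ^ l ≤ 1 / 4)
    {π : ℕ → S → A → ℝ} (hpol : ∀ k, IsPolicy (π k)) (hpos : ∀ k s a, 0 < π k s a)
    {V : ℝ → (S → A → ℝ) → S → ℝ}
    (hV : ∀ t : ℝ, 0 ≤ t → ∀ w, IsPolicy w → IsValue P c (perturb h (π 0) t) γ w (V t w))
    {w : S → A → ℝ} (hw : IsPolicy w) {ν : S → ℝ} (hν : ∀ s, 0 ≤ ν s)
    (hνw : ν ᵥ* Pmat P w = ν) (hgap : ν ⬝ᵥ V 0 w ≤ ν ⬝ᵥ V 0 (π 0))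
    {τ η : ℕ → ℝ} (hτ : ∀ k, τ k = (1 / 2 : ℝ) ^ (k / l + 1))
    (hη : ∀ k, 1 + η k * τ k = 1 / γ)
    (hstep : ∀ k, IsAPMDStep P c h γ (π 0) (τ k) (η k) (π k) (V (τ k) (π k)) (π (k + 1)))
    (k : ℕ) :
    ν ⬝ᵥ V 0 (π k) - ν ⬝ᵥ V 0 w ≤ (1 / 2 : ℝ) ^ (k / l)
      * (ν ⬝ᵥ V 0 (π 0) - ν ⬝ᵥ V 0 w + 2 * avgKL ν (π 0) w / (1 - γ)) := by
  set Φ : ℝ → ℕ → ℝ := fun t k => lyapunov γ t ν (V t (π k)) (V t w) (π k) w with hΦ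
  have hΦ0 (k : ℕ) : Φ 0 k = ν ⬝ᵥ V 0 (π k) - ν ⬝ᵥ V 0 w := by simp [hΦ, lyapunov]
  have hτ0 (k : ℕ) : 0 < τ k := hτ k ▸ by positivity
  set B := avgKL ν (π 0) w / (1 - γ)
  have hB : 0 ≤ B := div_nonneg (avgKL_nonneg hν (hpol 0) (hpos 0) hw) (sub_pos.2 hγ1).le
  have hinit : Φ (τ 0) 0 ≤ Φ 0 0 :=
    lyapunov_reference_le hP hγ0.le hγ1 (hpol 0) (hpos 0) (hV _ (hτ0 0).le _ (hpol 0))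
      (hV 0 le_rfl _ (hpol 0)) (hV _ (hτ0 0).le w hw) (hV 0 le_rfl w hw) hν hνw
  have hcontract (k : ℕ) : Φ (τ k) (k + 1) ≤ γ * Φ (τ k) k :=
    (hstep k).lyapunov_le hP hγ0 hγ1 hconv (hτ0 k) (hη k) (hpos 0) (hpos k) (hpos (k + 1))
      (hpol k) (hV _ (hτ0 k).le _ (hpol k)) (hV _ (hτ0 k).le _ (hpol (k + 1))) hw
      (hV _ (hτ0 k).le w hw) hν hνw
  have hreduce (k : ℕ) {t' t : ℝ} (ht' : 0 ≤ t') (ht : t' ≤ t) :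
      Φ t' k ≤ Φ t k + (t - t') * B :=
    lyapunov_le_add_of_le hP hγ0.le hγ1 (hpol 0) (hpos 0) (hpol k) (hpos k) hw ht
      (hV t (ht'.trans ht) _ (hpol k)) (hV t' ht' _ (hpol k)) (hV t (ht'.trans ht) w hw)
      (hV t' ht' w hw) hν hνw
  have hτanti (k : ℕ) : τ (k + 1) ≤ τ k := by
    simpa only [hτ] using antitone_half_pow_div l k.le_succ
  have hδ : 0 ≤ Φ 0 0 := by rw [hΦ0]; exact sub_nonneg.2 hgap
  have hdecay : Φ (τ k) k ≤ (1 / 2) ^ (k / l) * (Φ 0 0 + B) := by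
    refine le_of_halving_recurrence (x := fun k => Φ (τ k) k) hγ0.le hγ1.le hl hδ hB hinit
      (fun k => ?_) k
    rw [← hτ, ← hτ]
    linarith [hreduce (k + 1) (hτ0 (k + 1)).le (hτanti k), hcontract k]
  calc ν ⬝ᵥ V 0 (π k) - ν ⬝ᵥ V 0 w
      ≤ Φ (τ k) k + τ k * B := by simpa [hΦ0] using hreduce k le_rfl (hτ0 k).le
    _ ≤ (1 / 2) ^ (k / l) * (Φ 0 0 + B) + (1 / 2) ^ (k / l) * B := by
        have hτle : τ k ≤ (1 / 2) ^ (k / l) := by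
          rw [hτ]
          exact pow_le_pow_of_le_one (by norm_num) (by norm_num) (Nat.le_succ _)
        exact add_le_add hdecay (mul_le_mul_of_nonneg_right hτle hB)
    _ = (1 / 2) ^ (k / l) * (ν ⬝ᵥ V 0 (π 0) - ν ⬝ᵥ V 0 w
          + 2 * avgKL ν (π 0) w / (1 - γ)) := by
        rw [hΦ0, mul_div_assoc]
        ring

/-- linear convergence of APMD with halving perturbation: with
`l = ⌈log_γ(1/4)⌉`, `τ_k = 2^{-(⌊k/l⌋+1)}` and `1 + η_k τ_k = 1/γ`, for every
`k`: `f(π_k) - f(π*) ≤ 2^{-⌊k/l⌋} [f(π_0) - f(π*) + 2 log|A|/(1-γ)]`. -/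
theorem apmd_linear_convergence_halving {S A : Type*} [Fintype S] [Fintype A]
    [Nonempty S] [Nonempty A]
    (P : S → A → S → ℝ) (hP0 : ∀ s a s', 0 ≤ P s a s')
    (hP1 : ∀ s a, ∑ s', P s a s' = 1)
    (c : S → A → ℝ) (γ : ℝ) (hγ0 : 0 < γ) (hγ1 : γ < 1)
    (h : S → (A → ℝ) → ℝ) (h' : S → (A → ℝ) → A → ℝ)
    (hconv : ConvexReg h h' 0)
    (l : ℕ) (hl : (l : ℤ) = Int.ceil (Real.logb γ (1/4)))
    (π : ℕ → S → A → ℝ)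
    (hunif : ∀ s a, π 0 s a = 1 / (Fintype.card A : ℝ))
    (hpol : ∀ k, IsPolicy (π k)) (hpos : ∀ k s a, 0 < π k s a)
    (V : ℝ → (S → A → ℝ) → S → ℝ)
    (hV : ∀ τ' : ℝ, 0 ≤ τ' → ∀ w : S → A → ℝ, IsPolicy w →
      IsValue P c (fun s p => h s p + τ' * KL (π 0 s) p) γ w (V τ' w))
    (πstar : S → A → ℝ) (hπstar : IsPolicy πstar)
    (hopt : ∀ w : S → A → ℝ, IsPolicy w → ∀ s, V 0 πstar s ≤ V 0 w s)
    (ν : S → ℝ) (hν0 : ∀ s, 0 ≤ ν s) (hν1 : ∑ s, ν s = 1)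
    (hstat : ∀ s', ∑ s, ν s * (∑ a, πstar s a * P s a s') = ν s')
    (τ η : ℕ → ℝ) (hτ : ∀ k, τ k = (1/2 : ℝ) ^ (k / l + 1))
    (hη : ∀ k, 1 + η k * τ k = 1 / γ)
    (hstep : ∀ k s, IsProxStep
      (Qfun P c (fun s' p => h s' p + τ k * KL (π 0 s') p) γ (π k)
        (V (τ k) (π k)) s)
      (fun p => h s p + τ k * KL (π 0 s) p) (η k) (π k s) (π (k+1) s)) :
    ∀ k : ℕ,
      (∑ s, ν s * V 0 (π k) s) - (∑ s, ν s * V 0 πstar s)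
        ≤ (1/2 : ℝ) ^ (k / l) * ((∑ s, ν s * V 0 (π 0) s)
            - (∑ s, ν s * V 0 πstar s)
          + 2 * Real.log (Fintype.card A) / (1 - γ)) := by
  have hP : ∀ s a, P s a ∈ simplex S := fun s a => ⟨hP0 s a, hP1 s a⟩
  have hγl : γ ^ l ≤ 1 / 4 := pow_le_of_eq_ceil_logb hγ0 hγ1 (by norm_num) hl
  have hgap : ν ⬝ᵥ V 0 πstar ≤ ν ⬝ᵥ V 0 (π 0) :=
    dotProduct_le_dotProduct_of_nonneg_left (hopt (π 0) (hpol 0)) hν0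
  have hD : avgKL ν (π 0) πstar ≤ Real.log (Fintype.card A) :=
    avgKL_le_of_forall_le ⟨hν0, hν1⟩ fun s => KL_uniform_le (hunif s) (hπstar s)
  intro k
  refine (apmd_linear_convergence_halving_general hP hγ0 hγ1 hconv.convexOn hγl hpol hpos hV
    hπstar hν0 (funext hstat) hgap hτ hη hstep k).trans ?_
  rw [dotProduct, dotProduct]
  gcongr

end RL
end
end

section
/- (Bias bound for the mean iterates of conditional temporal difference.) Let F : ℝⁿ → ℝⁿ be a linear map satisfying ⟨F(θ) − F(θ'), θ − θ'⟩ ≥ Λ_min‖θ − θ'‖₂² and ‖F(θ) − F(θ')‖₂ ≤ Λ_max‖θ − θ'‖₂ for all θ, θ', with 0 < Λ_min ≤ Λ_max, and let θ* satisfy F(θ*) = 0. Let t₀ ≥ max{8Λ_max²/Λ_min², 4}, β_t = 2/(Λ_min(t + t₀ − 1)), and let (θ̄_t)_{t≥1} and (δ̄_t)_{t≥1} in ℝⁿ satisfy θ̄_{t+1} = θ̄_t − β_t F(θ̄_t) + β_t δ̄_t, with ‖θ̄_t − θ*‖₂ ≤ R and ‖δ̄_t‖₂ ≤ C R ρ^α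 for all t ≥ 1, for some constants R, C > 0, ρ ∈ [0,1), α ∈ ℕ. Then for every t ≥ 1: ‖θ̄_{t+1} − θ*‖₂² ≤ ((t₀−1)(t₀−2)(t₀−3))/((t+t₀−1)(t+t₀−2)(t+t₀−3)) · ‖θ̄_1 − θ*‖₂² + 8CR²ρ^α/(3Λ_min) + C²R²ρ^{2α}/Λ_min². -/
open scoped RealInnerProductSpace

/-!
With `s = t + t₀ - 1`, the unperturbed step contracts the squared distance to `θ*` by the factor
`1 - 2 β μ + β² L² ≤ 1 - 3 / s`, and the perturbation adds at most `2 β R ε + β² ε²`, which is at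
most `(3 / s) b` for the constant `b = 8 R ε / (3 μ) + ε² / μ²`. So one step is bounded by a convex
combination of the previous squared distance and `b` with weight `3 / s` on `b`; unrolling leaves
the telescoping product `∏ (1 - 3 / s)` on the initial distance and at most `b` on the bias.
-/

section Recursion

open Finset

lemma sub_le_prod_mul_sub_of_le_convexCombination {a γ : ℕ → ℝ} {b : ℝ} (hγ : ∀ t, γ t ≤ 1)
    (ha : ∀ t, a (t + 1) ≤ (1 - γ t) * a t + γ t * b) (t : ℕ) :
    a t - b ≤ (∏ i ∈ range t, (1 - γ i)) * (a 0 - b) := by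
  induction t with
  | zero => simp
  | succ t ih =>
    calc a (t + 1) - b ≤ (1 - γ t) * (a t - b) := by linarith [ha t]
      _ ≤ (1 - γ t) * ((∏ i ∈ range t, (1 - γ i)) * (a 0 - b)) :=
        mul_le_mul_of_nonneg_left ih (sub_nonneg.mpr (hγ t))
      _ = (∏ i ∈ range (t + 1), (1 - γ i)) * (a 0 - b) := by rw [prod_range_succ]; ring

lemma prod_range_one_sub_three_div {t₀ : ℝ} (ht₀ : 3 < t₀) (t : ℕ) :
    ∏ i ∈ range t, (1 - 3 / (i + t₀)) =
      ((t₀ - 1) * (t₀ - 2) * (t₀ - 3)) / ((t + t₀ - 1) * (t + t₀ - 2) * (t + t₀ - 3)) := by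
  induction t with
  | zero =>
    have h₁ : t₀ - 1 ≠ 0 := by linarith
    have h₂ : t₀ - 2 ≠ 0 := by linarith
    have h₃ : t₀ - 3 ≠ 0 := by linarith
    simp [h₁, h₂, h₃]
  | succ t ih =>
    have hs : 3 < t + t₀ := ht₀.trans_le (le_add_of_nonneg_left t.cast_nonneg)
    have h₀ : t + t₀ ≠ 0 := by linarith [hs]
    have h₁ : t + t₀ - 1 ≠ 0 := by linarith [hs]
    have h₂ : t + t₀ - 2 ≠ 0 := by linarith [hs]
    have h₃ : t + t₀ - 3 ≠ 0 := by linarith [hs]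
    rw [prod_range_succ, ih, Nat.cast_succ, show (t : ℝ) + 1 + t₀ - 1 = t + t₀ by ring,
      show (t : ℝ) + 1 + t₀ - 2 = t + t₀ - 1 by ring,
      show (t : ℝ) + 1 + t₀ - 3 = t + t₀ - 2 by ring]
    field_simp

end Recursion

section StepSize

variable {μ s : ℝ}

lemma contractionFactor_le_one_sub_three_div {L : ℝ} (hμ : 0 < μ) (hs : 0 < s)
    (hL : 4 * L ^ 2 / μ ^ 2 ≤ s) :
    1 - 2 * (2 / (μ * s)) * μ + (2 / (μ * s)) ^ 2 * L ^ 2 ≤ 1 - 3 / s := by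
  calc 1 - 2 * (2 / (μ * s)) * μ + (2 / (μ * s)) ^ 2 * L ^ 2
      = 1 - 4 / s + 4 * L ^ 2 / μ ^ 2 / s ^ 2 := by field_simp; ring
    _ ≤ 1 - 4 / s + s / s ^ 2 := by gcongr
    _ = 1 - 3 / s := by field_simp; ring

lemma perturbation_le_three_div_mul_bias {R ε : ℝ} (hμ : 0 < μ) (hs : 4 / 3 ≤ s)
    (hR : 0 ≤ R) (hε : 0 ≤ ε) :
    2 * (2 / (μ * s)) * (R * ε) + (2 / (μ * s)) ^ 2 * ε ^ 2 ≤
      3 / s * (8 * R * ε / (3 * μ) + ε ^ 2 / μ ^ 2) := by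
  have hs₀ : 0 < s := by linarith
  have hs_inv : 4 / s ≤ 3 := by rw [div_le_iff₀ hs₀]; linarith
  calc 2 * (2 / (μ * s)) * (R * ε) + (2 / (μ * s)) ^ 2 * ε ^ 2
      = 4 * (R * ε / (μ * s)) + 4 / s * (ε ^ 2 / (μ ^ 2 * s)) := by field_simp; ring
    _ ≤ 8 * (R * ε / (μ * s)) + 3 * (ε ^ 2 / (μ ^ 2 * s)) := by gcongr; norm_num
    _ = 3 / s * (8 * R * ε / (3 * μ) + ε ^ 2 / μ ^ 2) := by field_simp

end StepSize

section InnerProductSpace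

variable {E : Type*} [SeminormedAddCommGroup E] [InnerProductSpace ℝ E]

lemma norm_sub_smul_sq_le_of_le_inner {x g : E} {μ L β : ℝ} (hβ : 0 ≤ β)
    (hinner : μ * ‖x‖ ^ 2 ≤ ⟪g, x⟫) (hnorm : ‖g‖ ≤ L * ‖x‖) :
    ‖x - β • g‖ ^ 2 ≤ (1 - 2 * β * μ + β ^ 2 * L ^ 2) * ‖x‖ ^ 2 := by
  calc ‖x - β • g‖ ^ 2 = ‖x‖ ^ 2 - 2 * β * ⟪g, x⟫ + β ^ 2 * ‖g‖ ^ 2 := by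
        rw [norm_sub_sq_real, inner_smul_right, real_inner_comm, norm_smul, mul_pow,
          Real.norm_eq_abs, sq_abs, mul_assoc]
    _ ≤ ‖x‖ ^ 2 - 2 * β * (μ * ‖x‖ ^ 2) + β ^ 2 * (L * ‖x‖) ^ 2 := by gcongr
    _ = (1 - 2 * β * μ + β ^ 2 * L ^ 2) * ‖x‖ ^ 2 := by ring

lemma norm_add_smul_sq_le {y d : E} {β R ε : ℝ} (hβ : 0 ≤ β) (hy : ‖y‖ ≤ R) (hd : ‖d‖ ≤ ε) :
    ‖y + β • d‖ ^ 2 ≤ ‖y‖ ^ 2 + 2 * β * (R * ε) + β ^ 2 * ε ^ 2 := by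
  have hR : 0 ≤ R := (norm_nonneg y).trans hy
  have hinner : ⟪y, d⟫ ≤ R * ε := (real_inner_le_norm y d).trans (by gcongr)
  calc ‖y + β • d‖ ^ 2 = ‖y‖ ^ 2 + 2 * β * ⟪y, d⟫ + β ^ 2 * ‖d‖ ^ 2 := by
        rw [norm_add_sq_real, inner_smul_right, norm_smul, mul_pow, Real.norm_eq_abs, sq_abs,
          mul_assoc]
    _ ≤ ‖y‖ ^ 2 + 2 * β * (R * ε) + β ^ 2 * ε ^ 2 := by gcongr

lemma norm_sub_smul_add_smul_sq_le_convexCombination {x g d : E} {μ L s R ε : ℝ} (hμ : 0 < μ)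
    (hs : 4 / 3 ≤ s) (hL : 4 * L ^ 2 / μ ^ 2 ≤ s) (hinner : μ * ‖x‖ ^ 2 ≤ ⟪g, x⟫)
    (hnorm : ‖g‖ ≤ L * ‖x‖) (hx : ‖x‖ ≤ R) (hd : ‖d‖ ≤ ε) :
    ‖x - (2 / (μ * s)) • g + (2 / (μ * s)) • d‖ ^ 2 ≤
      (1 - 3 / s) * ‖x‖ ^ 2 + 3 / s * (8 * R * ε / (3 * μ) + ε ^ 2 / μ ^ 2) := by
  have hs₀ : 0 < s := by linarith
  have hβ : 0 ≤ 2 / (μ * s) := by positivity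
  have hcontract : ‖x - (2 / (μ * s)) • g‖ ^ 2 ≤ (1 - 3 / s) * ‖x‖ ^ 2 :=
    (norm_sub_smul_sq_le_of_le_inner hβ hinner hnorm).trans <| by
      gcongr
      exact contractionFactor_le_one_sub_three_div hμ hs₀ hL
  have hstep : ‖x - (2 / (μ * s)) • g‖ ≤ R := by
    refine (le_of_sq_le_sq (hcontract.trans ?_) (norm_nonneg x)).trans hx
    exact mul_le_of_le_one_left (sq_nonneg _) (sub_le_self _ (by positivity))
  have hbias := perturbation_le_three_div_mul_bias hμ hs ((norm_nonneg x).trans hx)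
    ((norm_nonneg d).trans hd)
  linarith [norm_add_smul_sq_le hβ hstep hd]

theorem ctd_bias_bound_general {F : E → E} {μ L : ℝ} (hμ : 0 < μ) {θstar : E}
    (hmono : ∀ θ, μ * ‖θ - θstar‖ ^ 2 ≤ ⟪F θ, θ - θstar⟫)
    (hlip : ∀ θ, ‖F θ‖ ≤ L * ‖θ - θstar‖)
    {t₀ : ℝ} (hL : 4 * L ^ 2 / μ ^ 2 ≤ t₀) (ht₀ : 3 < t₀)
    {β : ℕ → ℝ} (hβ : ∀ t : ℕ, β t = 2 / (μ * (t + t₀ - 1)))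
    {θ δ : ℕ → E} {R ε : ℝ}
    (hrec : ∀ t : ℕ, 1 ≤ t → θ (t + 1) = θ t - β t • F (θ t) + β t • δ t)
    (hbound : ∀ t : ℕ, 1 ≤ t → ‖θ t - θstar‖ ≤ R)
    (hbias : ∀ t : ℕ, 1 ≤ t → ‖δ t‖ ≤ ε) (t : ℕ) :
    ‖θ (t + 1) - θstar‖ ^ 2 ≤
      ((t₀ - 1) * (t₀ - 2) * (t₀ - 3)) / ((t + t₀ - 1) * (t + t₀ - 2) * (t + t₀ - 3)) *
          ‖θ 1 - θstar‖ ^ 2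
        + 8 * R * ε / (3 * μ) + ε ^ 2 / μ ^ 2 := by
  have hR : 0 ≤ R := (norm_nonneg _).trans (hbound 1 le_rfl)
  have hε : 0 ≤ ε := (norm_nonneg _).trans (hbias 1 le_rfl)
  have hs : ∀ k : ℕ, t₀ ≤ k + t₀ := fun k ↦ le_add_of_nonneg_left k.cast_nonneg
  have hweight : ∀ k : ℕ, 3 / (k + t₀) ≤ 1 := fun k ↦
    div_le_one_of_le₀ (by linarith [hs k]) (by linarith [hs k])
  have hstep : ∀ k : ℕ, ‖θ (k + 1 + 1) - θstar‖ ^ 2 ≤ (1 - 3 / (k + t₀)) * ‖θ (k + 1) - θstar‖ ^ 2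
      + 3 / (k + t₀) * (8 * R * ε / (3 * μ) + ε ^ 2 / μ ^ 2) := fun k ↦ by
    have hk : 1 ≤ k + 1 := k.succ_pos
    have hβk : β (k + 1) = 2 / (μ * (k + t₀)) := by rw [hβ]; push_cast; ring_nf
    rw [hrec _ hk, hβk, add_sub_right_comm, sub_right_comm]
    exact norm_sub_smul_add_smul_sq_le_convexCombination hμ (by linarith [hs k])
      (hL.trans (hs k)) (hmono _) (hlip _) (hbound _ hk) (hbias _ hk)
  have hunroll := sub_le_prod_mul_sub_of_le_convexCombination
    (a := fun k ↦ ‖θ (k + 1) - θstar‖ ^ 2) hweight hstep t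
  have hprod : 0 ≤ ∏ k ∈ Finset.range t, (1 - 3 / ((k : ℝ) + t₀)) :=
    Finset.prod_nonneg fun k _ ↦ sub_nonneg.mpr (hweight k)
  have hfloor : 0 ≤ 8 * R * ε / (3 * μ) + ε ^ 2 / μ ^ 2 := by positivity
  rw [← prod_range_one_sub_three_div ht₀]
  linarith [mul_nonneg hprod hfloor]

end InnerProductSpace

/-- bias bound for the mean iterates of conditional temporal
difference: for a linear, strongly monotone, Lipschitz operator `F` with root
`θ*`, stepsizes `β_t = 2/(Λ_min (t + t₀ - 1))` and the perturbed recursion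
`θ̄_{t+1} = θ̄_t - β_t F(θ̄_t) + β_t δ̄_t` with `‖θ̄_t - θ*‖ ≤ R` and
`‖δ̄_t‖ ≤ C R ρ^α`, one has for all `t ≥ 1`:
`‖θ̄_{t+1} - θ*‖² ≤ ((t₀-1)(t₀-2)(t₀-3))/((t+t₀-1)(t+t₀-2)(t+t₀-3)) ‖θ̄_1 - θ*‖²
  + 8CR²ρ^α/(3Λ_min) + C²R²ρ^{2α}/Λ_min²`. -/
theorem ctd_bias_bound {n : ℕ}
    (F : EuclideanSpace ℝ (Fin n) →ₗ[ℝ] EuclideanSpace ℝ (Fin n))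
    (Λmin Λmax : ℝ) (hΛ0 : 0 < Λmin) (hΛ : Λmin ≤ Λmax)
    (hmono : ∀ θ θ' : EuclideanSpace ℝ (Fin n),
      Λmin * ‖θ - θ'‖ ^ 2 ≤ ⟪F θ - F θ', θ - θ'⟫)
    (hlip : ∀ θ θ' : EuclideanSpace ℝ (Fin n),
      ‖F θ - F θ'‖ ≤ Λmax * ‖θ - θ'‖)
    (θstar : EuclideanSpace ℝ (Fin n)) (hθstar : F θstar = 0)
    (t₀ : ℝ) (ht₀ : max (8 * Λmax ^ 2 / Λmin ^ 2) 4 ≤ t₀)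
    (β : ℕ → ℝ) (hβ : ∀ t : ℕ, β t = 2 / (Λmin * (t + t₀ - 1)))
    (θbar δbar : ℕ → EuclideanSpace ℝ (Fin n))
    (R C : ℝ) (hR : 0 < R) (hC : 0 < C)
    (ρ : ℝ) (hρ0 : 0 ≤ ρ) (hρ1 : ρ < 1) (α : ℕ)
    (hrec : ∀ t : ℕ, 1 ≤ t →
      θbar (t+1) = θbar t - β t • F (θbar t) + β t • δbar t)
    (hbound : ∀ t : ℕ, 1 ≤ t → ‖θbar t - θstar‖ ≤ R)
    (hbias : ∀ t : ℕ, 1 ≤ t → ‖δbar t‖ ≤ C * R * ρ ^ α) :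
    ∀ t : ℕ, 1 ≤ t →
      ‖θbar (t+1) - θstar‖ ^ 2 ≤
        ((t₀ - 1) * (t₀ - 2) * (t₀ - 3)) /
            ((t + t₀ - 1) * (t + t₀ - 2) * (t + t₀ - 3)) *
            ‖θbar 1 - θstar‖ ^ 2
          + 8 * C * R ^ 2 * ρ ^ α / (3 * Λmin)
          + C ^ 2 * R ^ 2 * ρ ^ (2 * α) / Λmin ^ 2 := by
  have hL : 4 * Λmax ^ 2 / Λmin ^ 2 ≤ t₀ := le_trans (by gcongr; norm_num) (le_of_max_le_left ht₀)
  exact fun t _ ↦ (ctd_bias_bound_general hΛ0 (by simpa [hθstar] using (hmono · θstar))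
    (by simpa [hθstar] using (hlip · θstar)) hL (by linarith [le_of_max_le_right ht₀]) hβ hrec
    hbound hbias t).trans_eq (by ring)
end

section
/- (Three-point lemma for the perturbed prox-mapping.) Fix s ∈ S, a policy π_k with full support, a fixed full-support policy π_0, a vector G ∈ ℝ^A, η_k > 0 and τ_k ≥ 0. Let π_{k+1}(·|s) be the minimizer over p ∈ Δ_A of η_k[⟨G, p⟩ + h^p(s) + τ_k D_{π_0}^p(s)] + D_{π_k}^p(s), where h is convex relative to KL. Then for every p ∈ Δ_A: η_k[⟨G, π_{k+1}(·|s) − p(·|s)⟩ + h^{π_{k+1}}(s) − h^p(s)] + η_k τ_k [D_{π_0}^{π_{k+1}}(s) − D_{π_0}^p(s)] + D_{π_k}^{π_{k+1}}(s) ≤ D_{π_k}^p(s) − (1 + η_k τ_k) D_{π_{k+1}}^p(s). -/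
open Finset

noncomputable section

namespace RL

/-!
The divergences from `π₀` and `π` differ from `negEntropy` by linear terms, so the prox objective is
`F + c * negEntropy` with `F` convex and `c = 1 + η τ`.
Comparing a minimizer `q` with the points of the segment from `q` to `p` gives
`F q - F p ≤ c * (negEntropy (q + t (p - q)) - negEntropy q) / t` for small `t > 0`. The right side
tends to `-∞` if `q` vanishes at a coordinate where `p` does not, so `p` is supported in the support
of `q`; the quotient then converges to the directional derivative of the negative entropy, which is
`negEntropy p - negEntropy q - KL q p`.
-/

section Convex

variable {E : Type*} [AddCommGroup E] [Module ℝ E] {s : Set E}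

lemma convexOn_of_forall_exists_subgradient (hs : Convex ℝ s) {f : E → ℝ}
    (hf : ∀ x ∈ s, ∃ g : E →ₗ[ℝ] ℝ, ∀ y ∈ s, f x + g (y - x) ≤ f y) : ConvexOn ℝ s f := by
  refine ⟨hs, fun x hx y hy a b ha hb hab => ?_⟩
  obtain ⟨g, hg⟩ := hf _ (hs hx hy ha hb hab)
  set z := a • x + b • y
  have balance : a * g (x - z) + b * g (y - z) = 0 := by
    have : a • (x - z) + b • (y - z) = 0 := by
      rw [smul_sub, smul_sub, sub_add_sub_comm, ← add_smul, hab, one_smul, sub_self]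
    simpa only [map_add, map_smul, map_zero, smul_eq_mul] using congrArg g this
  calc f z = a * (f z + g (x - z)) + b * (f z + g (y - z)) := by
        linear_combination -balance - f z * hab
    _ ≤ a * f x + b * f y := by
        gcongr
        · exact hg x hx
        · exact hg y hy

variable {F Ψ : E → ℝ} {p q : E}

lemma mul_sub_le_sub_of_isMinOn_add (hF : ConvexOn ℝ s F) (hq : q ∈ s) (hp : p ∈ s)
    (hmin : IsMinOn (fun x => F x + Ψ x) s q) {t : ℝ} (ht₀ : 0 ≤ t) (ht₁ : t ≤ 1) :
    t * (F q - F p) ≤ Ψ (AffineMap.lineMap q p t) - Ψ q := by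
  have hconv : F (AffineMap.lineMap q p t) ≤ (1 - t) * F q + t * F p := by
    rw [AffineMap.lineMap_apply_module]
    exact hF.2 hq hp (sub_nonneg.2 ht₁) ht₀ (sub_add_cancel 1 t)
  have hle : F q + Ψ q ≤ F (AffineMap.lineMap q p t) + Ψ (AffineMap.lineMap q p t) :=
    hmin (hF.1.lineMap_mem hq hp ⟨ht₀, ht₁⟩)
  linarith

lemma sub_le_of_isMinOn_add_of_hasDerivWithinAt (hF : ConvexOn ℝ s F) (hq : q ∈ s) (hp : p ∈ s)
    (hmin : IsMinOn (fun x => F x + Ψ x) s q) {d : ℝ}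
    (hΨ : HasDerivWithinAt (fun t : ℝ => Ψ (AffineMap.lineMap q p t)) d (Set.Ioi 0) 0) :
    F q - F p ≤ d := by
  refine ge_of_tendsto ((hasDerivWithinAt_iff_tendsto_slope' Set.self_notMem_Ioi).1 hΨ) ?_
  filter_upwards [Ioo_mem_nhdsGT (zero_lt_one (α := ℝ))] with t ⟨ht₀, ht₁⟩
  rw [slope_def_field, AffineMap.lineMap_apply_zero, sub_zero, le_div_iff₀' ht₀]
  exact mul_sub_le_sub_of_isMinOn_add hF hq hp hmin ht₀.le ht₁.le

end Convex

section NegEntropy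

variable {A : Type*} [Fintype A] {p q : A → ℝ}

/-- The negative Shannon entropy `∑ a, p a * log (p a)`, which generates `KL` as its Bregman
divergence on the simplex. The convention `Real.log 0 = 0` makes a vanishing coordinate contribute
`0`. -/
def negEntropy (p : A → ℝ) : ℝ :=
  ∑ a, p a * Real.log (p a)

lemma KL_eq_negEntropy_sub {r : A → ℝ} (hpr : ∀ a, r a = 0 → p a = 0) :
    KL r p = negEntropy p - ∑ a, p a * Real.log (r a) := by
  rw [KL, negEntropy, ← sum_sub_distrib]
  refine sum_congr rfl fun a _ => ?_
  by_cases hpa : p a = 0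
  · simp [hpa]
  · rw [Real.log_div hpa (mt (hpr a) hpa), mul_sub]

lemma hasDerivAt_negEntropy_lineMap (hpq : ∀ a, q a = 0 → p a = 0) :
    HasDerivAt (fun t : ℝ => negEntropy (AffineMap.lineMap q p t))
      (∑ a, (p a - q a) * (Real.log (q a) + 1)) 0 := by
  simp only [negEntropy, AffineMap.pi_lineMap_apply]
  refine HasDerivAt.fun_sum fun a _ => ?_
  by_cases hqa : q a = 0
  · simpa [hqa, hpq a hqa] using hasDerivAt_const (0 : ℝ) (0 : ℝ)
  · have hlog : HasDerivAt (fun x => x * Real.log x) (Real.log (q a) + 1)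
        (AffineMap.lineMap (q a) (p a) (0 : ℝ)) := by
      rw [AffineMap.lineMap_apply_zero]
      exact Real.hasDerivAt_mul_log hqa
    rw [mul_comm]
    exact hlog.comp 0 AffineMap.hasDerivAt_lineMap

lemma sum_sub_mul_log_add_one_eq (hpq : ∀ a, q a = 0 → p a = 0)
    (hsum : ∑ a, p a = ∑ a, q a) :
    ∑ a, (p a - q a) * (Real.log (q a) + 1) = negEntropy p - negEntropy q - KL q p := by
  rw [KL_eq_negEntropy_sub hpq, negEntropy, negEntropy]
  simp only [sub_mul, mul_add, mul_one, sum_sub_distrib, sum_add_distrib, hsum]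
  ring

lemma negEntropy_lineMap_le_of_eq_zero (hp : 0 ≤ p) (hq : 0 ≤ q) {a : A}
    (hqa : q a = 0) {t : ℝ} (ht₀ : 0 < t) (ht₁ : t ≤ 1) :
    negEntropy (AffineMap.lineMap q p t) ≤
      (1 - t) * negEntropy q + t * negEntropy p + t * (p a * Real.log t) := by
  classical
  have hconv (b : A) : AffineMap.lineMap (q b) (p b) t *
      Real.log (AffineMap.lineMap (q b) (p b) t) ≤
        (1 - t) * (q b * Real.log (q b)) + t * (p b * Real.log (p b)) := by
    rw [AffineMap.lineMap_apply_module]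
    exact Real.convexOn_mul_log.2 (hq b) (hp b) (sub_nonneg.2 ht₁) ht₀.le (sub_add_cancel 1 t)
  have hgain : AffineMap.lineMap (q a) (p a) t * Real.log (AffineMap.lineMap (q a) (p a) t) =
      (1 - t) * (q a * Real.log (q a)) + t * (p a * Real.log (p a)) + t * (p a * Real.log t) := by
    by_cases hpa : p a = 0
    · simp [hqa, hpa]
    · simp only [hqa, AffineMap.lineMap_apply_module, smul_eq_mul, mul_zero, zero_mul, zero_add,
        Real.log_mul ht₀.ne' hpa]
      ring
  simp only [negEntropy, AffineMap.pi_lineMap_apply, mul_sum, ← sum_add_distrib]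
  rw [← add_sum_erase _ _ (mem_univ a), ← add_sum_erase univ (fun b => _ + _) (mem_univ a), hgain,
    add_right_comm]
  gcongr with b
  exact hconv b

variable {s : Set (A → ℝ)} {F : (A → ℝ) → ℝ} {c : ℝ}

lemma eq_zero_of_isMinOn_add_negEntropy (hF : ConvexOn ℝ s F) (hc : 0 < c) (hq : q ∈ s)
    (hmin : IsMinOn (fun x => F x + c * negEntropy x) s q) (hp : p ∈ s) (hq₀ : 0 ≤ q) (hp₀ : 0 ≤ p)
    {a : A} (hqa : q a = 0) : p a = 0 := by
  by_contra hpa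
  have hpa_pos : 0 < p a := (hp₀ a).lt_of_ne' hpa
  have hbound (t : ℝ) (ht₀ : 0 < t) (ht₁ : t ≤ 1) :
      F q - F p ≤ c * (negEntropy p - negEntropy q + p a * Real.log t) := by
    refine le_of_mul_le_mul_left ?_ ht₀
    calc t * (F q - F p)
        ≤ c * negEntropy (AffineMap.lineMap q p t) - c * negEntropy q :=
          mul_sub_le_sub_of_isMinOn_add hF hq hp hmin ht₀.le ht₁
      _ ≤ c * ((1 - t) * negEntropy q + t * negEntropy p + t * (p a * Real.log t)) -
            c * negEntropy q := by
          gcongr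
          exact negEntropy_lineMap_le_of_eq_zero hp₀ hq₀ hqa ht₀ ht₁
      _ = t * (c * (negEntropy p - negEntropy q + p a * Real.log t)) := by ring
  have hlim : Filter.Tendsto
      (fun t => c * (negEntropy p - negEntropy q + p a * Real.log t))
      (nhdsWithin 0 (Set.Ioi 0)) Filter.atBot :=
    (Filter.tendsto_atBot_add_const_left _ _
      (Real.tendsto_log_nhdsGT_zero.const_mul_atBot hpa_pos)).const_mul_atBot hc
  obtain ⟨t, hlt, ht₀, ht₁⟩ := ((hlim.eventually_lt_atBot (F q - F p)).and
    (Ioo_mem_nhdsGT (zero_lt_one (α := ℝ)))).exists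
  exact hlt.not_ge (hbound t ht₀ ht₁.le)

lemma three_point_of_isMinOn_add_negEntropy (hF : ConvexOn ℝ s F) (hs : s ⊆ simplex A)
    (hc : 0 < c) (hq : q ∈ s) (hmin : IsMinOn (fun x => F x + c * negEntropy x) s q)
    (hp : p ∈ s) :
    F q + c * negEntropy q + c * KL q p ≤ F p + c * negEntropy p := by
  have hsupp (a : A) : q a = 0 → p a = 0 :=
    eq_zero_of_isMinOn_add_negEntropy hF hc hq hmin hp (hs hq).1 (hs hp).1
  have hsum : ∑ a, p a = ∑ a, q a := (hs hp).2.trans (hs hq).2.symm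
  have hvar := sub_le_of_isMinOn_add_of_hasDerivWithinAt hF hq hp hmin
    ((hasDerivAt_negEntropy_lineMap hsupp).const_mul c).hasDerivWithinAt
  rw [sum_sub_mul_log_add_one_eq hsupp hsum] at hvar
  linarith

lemma prox_objective_eq_add_negEntropy {π₀ π : A → ℝ} (hπ₀ : ∀ a, 0 < π₀ a) (hπ : ∀ a, 0 < π a)
    (G : A → ℝ) (h : (A → ℝ) → ℝ) (η τ : ℝ) (p : A → ℝ) :
    η * ((∑ a, G a * p a) + (h p + τ * KL π₀ p)) + KL π p =
      η * h p + ∑ a, (η * G a - η * τ * Real.log (π₀ a) - Real.log (π a)) * p a +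
        (1 + η * τ) * negEntropy p := by
  rw [KL_eq_negEntropy_sub fun a ha => absurd ha (hπ₀ a).ne',
    KL_eq_negEntropy_sub fun a ha => absurd ha (hπ a).ne']
  have hlin : ∑ a, (η * G a - η * τ * Real.log (π₀ a) - Real.log (π a)) * p a =
      η * ∑ a, G a * p a - η * τ * ∑ a, p a * Real.log (π₀ a) - ∑ a, p a * Real.log (π a) := by
    simp only [mul_sum, ← sum_sub_distrib]
    exact sum_congr rfl fun a _ => by ring
  rw [hlin]
  ring

lemma convexOn_mul_add_sum_mul {h : (A → ℝ) → ℝ} (hh : ConvexOn ℝ s h) {η : ℝ}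
    (hη : 0 ≤ η) (w : A → ℝ) : ConvexOn ℝ s (fun p => η * h p + ∑ a, w a * p a) :=
  (hh.smul hη).add ((dotProductBilin ℝ ℝ w).convexOn hh.1)

lemma convexOn_simplex_of_bregman_nonneg {h : (A → ℝ) → ℝ} {h' : (A → ℝ) → A → ℝ}
    (hconv : ∀ p ∈ simplex A, ∀ q ∈ simplex A,
      0 ≤ h p - (h q + ∑ a, h' q a * (p a - q a))) : ConvexOn ℝ (simplex A) h :=
  convexOn_of_forall_exists_subgradient (convex_stdSimplex ℝ A) fun q hq =>
    ⟨dotProductBilin ℝ ℝ (h' q), fun p hp => sub_nonneg.1 (hconv p hp q hq)⟩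

theorem perturbed_prox_three_point_general (hs : s ⊆ simplex A)
    {h : (A → ℝ) → ℝ} (hh : ConvexOn ℝ s h)
    {π₀ π : A → ℝ} (hπ₀ : ∀ a, 0 < π₀ a) (hπ : ∀ a, 0 < π a)
    (G : A → ℝ) {η τ : ℝ} (hη : 0 ≤ η) (hητ : 0 < 1 + η * τ) (hq : q ∈ s)
    (hmin : IsMinOn (fun p => η * ((∑ a, G a * p a) + (h p + τ * KL π₀ p)) + KL π p) s q)
    (hp : p ∈ s) :
    η * ((∑ a, G a * (q a - p a)) + (h q - h p)) + η * τ * (KL π₀ q - KL π₀ p) + KL π q ≤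
      KL π p - (1 + η * τ) * KL q p := by
  have three_point : η * ((∑ a, G a * q a) + (h q + τ * KL π₀ q)) + KL π q +
      (1 + η * τ) * KL q p ≤ η * ((∑ a, G a * p a) + (h p + τ * KL π₀ p)) + KL π p := by
    simp only [prox_objective_eq_add_negEntropy hπ₀ hπ] at hmin ⊢
    exact three_point_of_isMinOn_add_negEntropy
      (convexOn_mul_add_sum_mul hh hη _) hs hητ hq hmin hp
  simp only [mul_sub, sum_sub_distrib]
  linarith

end NegEntropy

/-- three-point lemma for the perturbed prox-mapping: if
`π_{k+1}(·|s)` minimizes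
`p ↦ η_k [⟨G, p⟩ + h^p(s) + τ_k D_{π_0}^p(s)] + D_{π_k}^p(s)` over the
simplex, where `h` is convex relative to KL, then for every `p ∈ Δ_A`:
`η_k [⟨G, π_{k+1} - p⟩ + h(π_{k+1}) - h(p)] + η_k τ_k [D_{π_0}^{π_{k+1}} - D_{π_0}^p]
  + D_{π_k}^{π_{k+1}} ≤ D_{π_k}^p - (1 + η_k τ_k) D_{π_{k+1}}^p`. -/
theorem perturbed_prox_three_point {A : Type*} [Fintype A] [Nonempty A]
    (h : (A → ℝ) → ℝ) (h' : (A → ℝ) → A → ℝ)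
    (hconv : ∀ p ∈ simplex A, ∀ q ∈ simplex A,
      0 ≤ h p - (h q + ∑ a, h' q a * (p a - q a)))
    (π0 : A → ℝ) (hπ0 : π0 ∈ simplex A) (hπ0pos : ∀ a, 0 < π0 a)
    (G : A → ℝ) (ηk τk : ℝ) (hηk : 0 < ηk) (hτk : 0 ≤ τk)
    (πk : A → ℝ) (hπk : πk ∈ simplex A) (hπkpos : ∀ a, 0 < πk a)
    (πk1 : A → ℝ)
    (hmin : IsProxStep G (fun p => h p + τk * KL π0 p) ηk πk πk1) :
    ∀ p ∈ simplex A,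
      ηk * ((∑ a, G a * (πk1 a - p a)) + (h πk1 - h p))
          + ηk * τk * (KL π0 πk1 - KL π0 p) + KL πk πk1 ≤
        KL πk p - (1 + ηk * τk) * KL πk1 p := by
  exact fun p hp => perturbed_prox_three_point_general subset_rfl
    (convexOn_simplex_of_bregman_nonneg hconv) hπ0pos hπkpos G hηk.le (by positivity)
    hmin.1 hmin.2 hp

end RL
end
end
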